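/- For any histogram h, the mechanisms LapRNC^{d̄,τ}(h, D_{d̄}(h)) — the limited histogram report noisy counts mechanism run on the domain D_{d̄}(h) of the top d̄ indices of h — and the unknown-domain Laplace mechanism LapUnk^{Δ,d̄,τ}(h) produce outcomes that are equal in distribution. -/

import Mathlib

open MeasureTheory
open scoped ENNReal

/-- Measurable space structure on `Option α`, via the identification `Option α ≃ α ⊕ Unit`. -/
instance Option.instMeasurableSpace' {α : Type*} [MeasurableSpace α] :
    MeasurableSpace (Option α) :=
  MeasurableSpace.comap (fun o : Option α => (o.elim (Sum.inr PUnit.unit) Sum.inl : α ⊕ PUnit.{1}))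
    inferInstance

/-- Measurable space structure on `List α`, via the identification of a list with its
length together with its entries. -/
instance List.instMeasurableSpace' {α : Type*} [MeasurableSpace α] :
    MeasurableSpace (List α) :=
  MeasurableSpace.comap (fun l : List α => (⟨l.length, l.get⟩ : Σ n : ℕ, Fin n → α))
    inferInstance

/-- Density of the Laplace distribution `Lap(b)`. -/
noncomputable def lapPdf (b z : ℝ) : ℝ := Real.exp (-|z| / b) / (2 * b)

/-- The Laplace distribution `Lap(b)` as a measure on `ℝ`. -/
noncomputable def lapMeasure (b : ℝ) : Measure ℝ :=
  volume.withDensity fun z => ENNReal.ofReal (lapPdf b z)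

/-- A permutation sorting the histogram counts in decreasing order. -/
noncomputable def sortPerm {d : ℕ} (h : Fin d → ℕ) : Equiv.Perm (Fin d) :=
  Tuple.sort fun i => OrderDual.toDual (h i)

/-- `sortedCount h p` is the `(p+1)`-st largest count of `h` (0-indexed), as a real. -/
noncomputable def sortedCount {d : ℕ} (h : Fin d → ℕ) (p : ℕ) : ℝ :=
  if hp : p < d then (h (sortPerm h ⟨p, hp⟩) : ℝ) else 0

/-- The set `D_{d̄}(h)` of indices of the top `d̄` counts of `h`. -/
noncomputable def topD {d : ℕ} (dbar : ℕ) (h : Fin d → ℕ) : Finset (Fin d) :=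
  Finset.image (fun a => sortPerm h a) (Finset.univ.filter fun a : Fin d => a.val < dbar)

/-- The output map of the limited histogram report noisy counts mechanism
`LapRNC^{d̄,τ}(h, D)`: each `i ∈ D` receives noisy count `v_i = h_i + Lap(2τΔ/ε)` and the
threshold is `v_⊥ = h_{(d̄+1)} + τ(1 + 2Δ·log(Δ/δ̂)/ε) + Lap(2τΔ/ε)`; the output is the
decreasingly-sorted list of (index, noisy count) pairs appearing strictly before `v_⊥`,
followed by `(⊥, v_⊥)` (`⊥` encoded as `none`). -/
noncomputable def lapRNCMap {d : ℕ} (dbar Δ : ℕ) (τ ε δhat : ℝ) (h : Fin d → ℕ)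
    (D : Finset (Fin d)) (X : (Fin d → ℝ) × ℝ) : List (Option (Fin d) × ℝ) :=
  let vbot : ℝ := sortedCount h dbar + τ * (1 + 2 * (Δ : ℝ) * Real.log ((Δ : ℝ) / δhat) / ε)
      + X.2
  let w : Fin (d + 1) → ℝ := fun p =>
    if hp : p.val < d then
      (if (⟨p.val, hp⟩ : Fin d) ∈ D then (h ⟨p.val, hp⟩ : ℝ) + X.1 ⟨p.val, hp⟩ else vbot - 1)
    else vbot
  let π := Tuple.sort fun p => OrderDual.toDual (w p)
  (((List.ofFn fun a : Fin (d + 1) => π a).takeWhile fun p => p.val != d).filterMap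
      fun p => if hp : p.val < d then
        (if (⟨p.val, hp⟩ : Fin d) ∈ D then some (some ⟨p.val, hp⟩, w p) else none)
      else none)
    ++ [(none, vbot)]

/-- The limited histogram report noisy counts mechanism `LapRNC^{d̄,τ}(h, D)` as a measure. -/
noncomputable def lapRNC {d : ℕ} (dbar Δ : ℕ) (τ ε δhat : ℝ) (h : Fin d → ℕ)
    (D : Finset (Fin d)) : Measure (List (Option (Fin d) × ℝ)) :=
  Measure.map (lapRNCMap dbar Δ τ ε δhat h D)
    ((Measure.pi fun _ : Fin d => lapMeasure (2 * τ * (Δ : ℝ) / ε)).prod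
      (lapMeasure (2 * τ * (Δ : ℝ) / ε)))

/-- The output map of the unknown-domain Laplace mechanism `LapUnk^{Δ,d̄,τ}`. -/
noncomputable def lapUnkMap {d : ℕ} (dbar Δ : ℕ) (τ ε δhat : ℝ) (h : Fin d → ℕ)
    (X : Fin (dbar + 1) → ℝ) : List (Option (Fin d) × ℝ) :=
  let vbot : ℝ := sortedCount h dbar + τ * (1 + 2 * (Δ : ℝ) * Real.log ((Δ : ℝ) / δhat) / ε)
      + X ⟨dbar, Nat.lt_succ_self dbar⟩
  let w : Fin (dbar + 1) → ℝ := fun p =>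
    if p.val < dbar then sortedCount h p.val + X p else vbot
  let π := Tuple.sort fun p => OrderDual.toDual (w p)
  (((List.ofFn fun a : Fin (dbar + 1) => π a).takeWhile fun p => p.val != dbar).filterMap
      fun p => if hp : p.val < d then some (some (sortPerm h ⟨p.val, hp⟩), w p) else none)
    ++ [(none, vbot)]

/-- The unknown-domain Laplace mechanism `LapUnk^{Δ,d̄,τ}` as a measure. -/
noncomputable def lapUnk {d : ℕ} (dbar Δ : ℕ) (τ ε δhat : ℝ) (h : Fin d → ℕ) :
    Measure (List (Option (Fin d) × ℝ)) :=
  Measure.map (lapUnkMap dbar Δ τ ε δhat h)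
    (Measure.pi fun _ : Fin (dbar + 1) => lapMeasure (2 * τ * (Δ : ℝ) / ε))

theorem isProbabilityMeasure_lapMeasure {b : ℝ} (hb : 0 < b) :
    IsProbabilityMeasure (lapMeasure b) := by
  have hint : ∫ z, lapPdf b z = 1 := by
    have hIoi : ∫ x in Set.Ioi (0 : ℝ), Real.exp (-x / b) = b := by
      have h := integral_exp_mul_Ioi (a := -b⁻¹) (by simpa using hb) 0
      simp only [mul_zero, Real.exp_zero, neg_div_neg_eq, one_div, inv_inv] at h
      simpa only [neg_mul, inv_mul_eq_div, ← neg_div] using h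
    have habs := integral_comp_abs (f := fun x => Real.exp (-x / b))
    simp only [lapPdf]
    rw [integral_div, habs, hIoi, div_self (by positivity)]
  refine ⟨?_⟩
  rw [lapMeasure, withDensity_apply _ MeasurableSet.univ, setLIntegral_univ,
    ← ofReal_integral_eq_lintegral_ofReal (integrable_of_integral_eq_one hint)
      (Filter.Eventually.of_forall fun z => by simp only [lapPdf, Pi.zero_apply]; positivity),
    hint, ENNReal.ofReal_one]

instance nullSingletonClass_lapMeasure (b : ℝ) :
    NullSingletonClass (lapMeasure b) :=
  ⟨fun x => withDensity_absolutelyContinuous volume _ (measure_singleton x)⟩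

@[simp]
theorem lapMeasure_zero : lapMeasure 0 = 0 := by
  simp [lapMeasure, lapPdf]

theorem ae_injective_add {n : ℕ} (μ : Measure ℝ) [SigmaFinite μ] [NullSingletonClass μ]
    (c : Fin (n + 1) → ℝ) :
    ∀ᵐ X ∂(Measure.pi fun _ : Fin (n + 1) => μ), Function.Injective fun p => c p + X p := by
  have hpair (p q : Fin (n + 1)) (hpq : p ≠ q) :
      ∀ᵐ X ∂(Measure.pi fun _ : Fin (n + 1) => μ), c p + X p ≠ c q + X q := by
    obtain ⟨r, rfl⟩ := Fin.exists_succAbove_eq hpq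
    have hmp := measurePreserving_piFinSuccAbove (fun _ : Fin (n + 1) => μ) q
    have hmeas : MeasurableSet
        {Y : ℝ × (Fin n → ℝ) | c (q.succAbove r) + Y.2 r ≠ c q + Y.1} :=
      (measurableSet_eq_fun (by fun_prop) (by fun_prop)).compl
    have hae : ∀ᵐ Y ∂(μ.prod (Measure.pi fun _ : Fin n => μ)),
        c (q.succAbove r) + Y.2 r ≠ c q + Y.1 := by
      rw [Measure.ae_prod_iff_ae_ae hmeas, Measure.ae_ae_comm hmeas]
      refine Filter.Eventually.of_forall fun y => ?_
      filter_upwards [compl_mem_ae_iff.2 (measure_singleton (c (q.succAbove r) + y r - c q))]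
        with x hx heq
      exact hx (by simp only [Set.mem_singleton_iff]; linarith)
    exact hmp.quasiMeasurePreserving.ae hae
  have hall : ∀ᵐ X ∂(Measure.pi fun _ : Fin (n + 1) => μ),
      ∀ p q, p ≠ q → c p + X p ≠ c q + X q := by
    simp only [ae_all_iff]
    exact hpair
  filter_upwards [hall] with X hX p q hpq
  exact by_contra fun hne => hX p q hne hpq

/-- The entries of the decreasing sort of `w` that come strictly before the last index. -/
noncomputable def cutoffList {n : ℕ} (w : Fin (n + 1) → ℝ) : List (Fin (n + 1)) :=
  (List.ofFn fun a => (Tuple.sort fun p => OrderDual.toDual (w p)) a).takeWhile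
    fun p => p.val != n

theorem mem_takeWhile_iff_lt {α : Type*} {w : α → ℝ} {q : α → Bool} {bot p : α} {l : List α}
    (hq : ∀ x, q x = false ↔ x = bot) (hw : ∀ x, x ≠ bot → w x ≠ w bot)
    (hl : l.Pairwise fun x y => w y ≤ w x) (hbot : bot ∈ l) :
    p ∈ l.takeWhile q ↔ p ∈ l ∧ w bot < w p := by
  induction l with
  | nil => simp at hbot
  | cons a t ih =>
    rw [List.pairwise_cons] at hl
    by_cases ha : a = bot
    · subst ha
      rw [List.takeWhile_cons_of_neg (by simp [(hq a).2 rfl])]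
      simp only [List.not_mem_nil, List.mem_cons, false_iff, not_and, not_lt]
      rintro (rfl | hp)
      exacts [le_rfl, hl.1 p hp]
    · have hqa : q a = true := by
        rw [← Bool.not_eq_false, hq]
        exact ha
      have hbt : bot ∈ t := (List.mem_cons.1 hbot).resolve_left (Ne.symm ha)
      rw [List.takeWhile_cons_of_pos hqa, List.mem_cons, List.mem_cons, ih hl.2 hbt]
      have hlt : w bot < w a := lt_of_le_of_ne (hl.1 bot hbt) (hw a ha).symm
      constructor
      · rintro (rfl | hp)
        exacts [⟨Or.inl rfl, hlt⟩, ⟨Or.inr hp.1, hp.2⟩]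
      · rintro ⟨rfl | hp, hlt⟩
        exacts [Or.inl rfl, Or.inr ⟨hp, hlt⟩]

theorem pairwise_ofFn_sort {n : ℕ} (w : Fin n → ℝ) :
    (List.ofFn fun a => (Tuple.sort fun p => OrderDual.toDual (w p)) a).Pairwise
      fun x y => x ≠ y ∧ w y ≤ w x := by
  rw [List.pairwise_ofFn]
  intro i j hij
  exact ⟨fun he => hij.ne ((Equiv.injective _) he),
    Tuple.monotone_sort (fun p => OrderDual.toDual (w p)) hij.le⟩

theorem mem_cutoffList {n : ℕ} {w : Fin (n + 1) → ℝ}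
    (hw : ∀ p, p ≠ Fin.last n → w p ≠ w (Fin.last n)) (p : Fin (n + 1)) :
    p ∈ cutoffList w ↔ w (Fin.last n) < w p := by
  have hmem (x : Fin (n + 1)) :
      x ∈ List.ofFn fun a => (Tuple.sort fun p => OrderDual.toDual (w p)) a := by
    rw [List.mem_ofFn]
    exact Equiv.surjective _ x
  rw [cutoffList, mem_takeWhile_iff_lt (fun x => by simp [Fin.ext_iff]) hw
    ((pairwise_ofFn_sort w).imp And.right) (hmem _)]
  simp only [hmem, true_and]

theorem pairwise_filterMap_cutoffList {n : ℕ} {β : Type*} {w : Fin (n + 1) → ℝ}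
    {g : Fin (n + 1) → Option (β × ℝ)} (hg : ∀ p x, g p = some x → x.2 = w p)
    (hinj : Set.InjOn w {p | g p ≠ none}) :
    ((cutoffList w).filterMap g).Pairwise fun x y => y.2 < x.2 := by
  rw [List.pairwise_filterMap]
  refine ((pairwise_ofFn_sort w).sublist (List.takeWhile_sublist _)).imp ?_
  intro p q hpq x hx y hy
  rw [hg p x hx, hg q y hy]
  exact lt_of_le_of_ne hpq.2 fun he => hpq.1 (hinj (by simp [hx]) (by simp [hy]) he.symm)

/-- The noisy counts compared by the unknown-domain mechanism, the last one being the threshold. -/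
noncomputable def unkCounts {d : ℕ} (dbar Δ : ℕ) (τ ε δhat : ℝ) (h : Fin d → ℕ)
    (X : Fin (dbar + 1) → ℝ) (p : Fin (dbar + 1)) : ℝ :=
  if p.val < dbar then sortedCount h p.val + X p
  else sortedCount h dbar + τ * (1 + 2 * (Δ : ℝ) * Real.log ((Δ : ℝ) / δhat) / ε)
      + X ⟨dbar, Nat.lt_succ_self dbar⟩

theorem lapUnkMap_eq {d : ℕ} (dbar Δ : ℕ) (τ ε δhat : ℝ) (h : Fin d → ℕ)
    (X : Fin (dbar + 1) → ℝ) :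
    lapUnkMap dbar Δ τ ε δhat h X =
      ((cutoffList (unkCounts dbar Δ τ ε δhat h X)).filterMap fun p =>
        if hp : p.val < d then
          some (some (sortPerm h ⟨p.val, hp⟩), unkCounts dbar Δ τ ε δhat h X p) else none)
      ++ [(none, unkCounts dbar Δ τ ε δhat h X (Fin.last dbar))] := by
  have hlast : unkCounts dbar Δ τ ε δhat h X (Fin.last dbar) = sortedCount h dbar +
      τ * (1 + 2 * (Δ : ℝ) * Real.log ((Δ : ℝ) / δhat) / ε)
      + X ⟨dbar, Nat.lt_succ_self dbar⟩ := by simp [unkCounts]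
  rw [hlast]
  rfl

theorem measurable_unkCounts {d : ℕ} (dbar Δ : ℕ) (τ ε δhat : ℝ) (h : Fin d → ℕ) :
    Measurable (unkCounts dbar Δ τ ε δhat h) := by
  refine measurable_pi_iff.2 fun p => ?_
  unfold unkCounts
  split_ifs <;> fun_prop

theorem ae_injective_unkCounts {d : ℕ} (dbar Δ : ℕ) (τ ε δhat : ℝ) (h : Fin d → ℕ)
    (μ : Measure ℝ) [SigmaFinite μ] [NullSingletonClass μ] :
    ∀ᵐ X ∂(Measure.pi fun _ : Fin (dbar + 1) => μ),
      Function.Injective (unkCounts dbar Δ τ ε δhat h X) := by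
  filter_upwards [ae_injective_add μ (unkCounts dbar Δ τ ε δhat h 0)] with X hX
  convert hX using 2 with p
  by_cases hp : p.val < dbar
  · simp [unkCounts, hp]
  · obtain rfl : p = Fin.last dbar := Fin.ext (by simp; omega)
    simp [unkCounts]
    rfl

theorem measurable_list_map {Ω α β : Type*} [MeasurableSpace Ω] [MeasurableSpace α]
    {f : Ω → β → α} (hf : ∀ x, Measurable fun ω => f ω x) (l : List β) :
    Measurable fun ω => l.map (f ω) := by
  rw [measurable_comap_iff]
  have heq : ((fun l : List α => (⟨l.length, l.get⟩ : Σ n : ℕ, Fin n → α)) ∘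
      fun ω => l.map (f ω)) =
      (Sigma.mk l.length) ∘ fun ω i => f ω (l.get i) := by
    funext ω
    refine Sigma.ext (by simp) ?_
    refine Function.hfunext (by simp) fun i j hij => ?_
    have hv : i.val = j.val := (Fin.heq_ext_iff (by simp)).1 hij
    simp [hv]
  rw [heq]
  refine Measurable.comp (fun s hs => ?_) (measurable_pi_iff.2 fun i => hf _)
  exact MeasurableSpace.measurableSet_iInf.1 hs _

theorem measurable_comp_sort {Ω γ : Type*} [MeasurableSpace Ω] [MeasurableSpace γ] {n : ℕ}
    {w : Ω → Fin n → ℝ} (hw : Measurable w) {G : Equiv.Perm (Fin n) → Ω → γ}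
    (hG : ∀ π, Measurable (G π)) :
    Measurable fun ω => G (Tuple.sort fun p => OrderDual.toDual (w ω p)) ω := by
  let _ : MeasurableSpace (Equiv.Perm (Fin n)) := ⊤
  have hwp (p : Fin n) : Measurable fun ω => w ω p := measurable_pi_iff.1 hw p
  have hsort : Measurable fun ω => Tuple.sort fun p => OrderDual.toDual (w ω p) := by
    refine measurable_to_countable' fun π => ?_
    have hset : (fun ω => Tuple.sort fun p => OrderDual.toDual (w ω p)) ⁻¹' {π} =
        {ω | (∀ i j, i ≤ j → w ω (π j) ≤ w ω (π i)) ∧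
          ∀ i j, i < j → w ω (π i) = w ω (π j) → π i < π j} := by
      ext ω
      rw [Set.mem_preimage, Set.mem_singleton_iff, eq_comm, Tuple.eq_sort_iff]
      rfl
    rw [hset]
    simp only [Set.ofPred_and, Set.ofPred_forall]
    refine .inter (.iInter fun i => .iInter fun j => .iInter fun _ =>
      measurableSet_le (hwp _) (hwp _)) (.iInter fun i => .iInter fun j => .iInter fun _ => ?_)
    exact (measurableSet_eq_fun (hwp _) (hwp _)).imp (.const _)
  exact (measurable_from_prod_countable_right (f := fun y : Equiv.Perm (Fin n) × Ω => G y.1 y.2)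
    hG).comp (hsort.prodMk measurable_id)

theorem measurable_lapUnkMap {d : ℕ} (dbar Δ : ℕ) (τ ε δhat : ℝ) (h : Fin d → ℕ) :
    Measurable (lapUnkMap dbar Δ τ ε δhat h) := by
  have hw := measurable_unkCounts dbar Δ τ ε δhat h
  have hwp (p : Fin (dbar + 1)) : Measurable fun X => unkCounts dbar Δ τ ε δhat h X p :=
    measurable_pi_iff.1 hw p
  let label (p : Fin (dbar + 1)) : Option (Option (Fin d) × Fin (dbar + 1)) :=
    if hp : p.val < d then some (some (sortPerm h ⟨p.val, hp⟩), p) else none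
  let labels (π : Equiv.Perm (Fin (dbar + 1))) : List (Option (Fin d) × Fin (dbar + 1)) :=
    (((List.ofFn fun a => π a).takeWhile fun p => p.val != dbar).filterMap label)
      ++ [(none, Fin.last dbar)]
  have heq : lapUnkMap dbar Δ τ ε δhat h = fun X =>
      (labels (Tuple.sort fun p => OrderDual.toDual (unkCounts dbar Δ τ ε δhat h X p))).map
        fun y => (y.1, unkCounts dbar Δ τ ε δhat h X y.2) := by
    funext X
    rw [lapUnkMap_eq]
    simp only [labels, List.map_append, List.map_filterMap, List.map_cons, List.map_nil]
    congr 2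
    funext p
    simp only [label]
    split_ifs <;> rfl
  rw [heq]
  exact measurable_comp_sort hw fun π =>
    measurable_list_map
      (f := fun X (y : Option (Fin d) × Fin (dbar + 1)) =>
        (y.1, unkCounts dbar Δ τ ε δhat h X y.2))
      (fun y => measurable_const.prodMk (hwp y.2)) (labels π)

/-- The noise seen by the unknown-domain mechanism: the noise of the top `dbar` indices in
decreasing order of their counts, followed by the noise of the threshold. -/
noncomputable def topNoise {d : ℕ} {dbar : ℕ} (hd : dbar < d) (h : Fin d → ℕ)
    (X : (Fin d → ℝ) × ℝ) (p : Fin (dbar + 1)) : ℝ :=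
  if p.val < dbar then X.1 (sortPerm h ⟨p.val, by omega⟩) else X.2

theorem measurePreserving_topNoise {d dbar : ℕ} (hd : dbar < d) (h : Fin d → ℕ)
    (μ : Measure ℝ) [IsProbabilityMeasure μ] :
    MeasurePreserving (topNoise hd h) ((Measure.pi fun _ : Fin d => μ).prod μ)
      (Measure.pi fun _ : Fin (dbar + 1) => μ) := by
  have hmeas : Measurable (topNoise hd h) := by
    refine measurable_pi_iff.2 fun p => ?_
    unfold topNoise
    split_ifs <;> fun_prop
  refine ⟨hmeas, (Measure.pi_eq fun s hs => ?_).symm⟩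
  let S (j : ℕ) : Set ℝ := if hj : j < dbar then s ⟨j, by omega⟩ else Set.univ
  have hpre : topNoise hd h ⁻¹' Set.univ.pi s =
      (Set.univ.pi fun i => S ((sortPerm h).symm i).val) ×ˢ s (Fin.last dbar) := by
    ext X
    rw [Set.mem_preimage, Set.mem_univ_pi, Set.mem_prod, Set.mem_univ_pi, Fin.forall_fin_succ',
      (sortPerm h).symm.forall_congr_left]
    simp only [Equiv.symm_symm, Equiv.symm_apply_apply]
    refine and_congr ⟨fun hX i => ?_, fun hX p => ?_⟩ (by simp [topNoise])
    · by_cases hi : i.val < dbar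
      · simpa [topNoise, S, hi] using hX ⟨i.val, hi⟩
      · simp [S, hi]
    · have hp := hX ⟨p.val, by omega⟩
      simp only [S, p.isLt, dif_pos] at hp
      simpa [topNoise] using! hp
  rw [Measure.map_apply hmeas (.univ_pi hs), hpre, Measure.prod_prod, Measure.pi_pi,
    Fin.prod_univ_castSucc, Equiv.prod_comp (sortPerm h).symm fun i : Fin d => μ (S i.val),
    Fin.prod_univ_eq_prod_range (fun j => μ (S j)) d,
    ← Finset.prod_subset (Finset.range_subset_range.2 hd.le) fun j _ hj => by
      simp [S, Finset.mem_range.not.1 hj],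
    ← Fin.prod_univ_eq_prod_range (fun j => μ (S j)) dbar]
  congr 1
  refine Finset.prod_congr rfl fun p _ => ?_
  simp only [S, p.isLt, dif_pos]
  rfl

theorem mem_topD {d dbar : ℕ} {h : Fin d → ℕ} {i : Fin d} :
    i ∈ topD dbar h ↔ ∃ a : Fin d, a.val < dbar ∧ sortPerm h a = i := by
  simp [topD]

theorem lapRNCMap_topD_eq_lapUnkMap {d : ℕ} (dbar Δ : ℕ) (τ ε δhat : ℝ) (hd : dbar < d)
    (h : Fin d → ℕ) (X : (Fin d → ℝ) × ℝ)
    (hinj : Function.Injective (unkCounts dbar Δ τ ε δhat h (topNoise hd h X))) :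
    lapRNCMap dbar Δ τ ε δhat h (topD dbar h) X =
      lapUnkMap dbar Δ τ ε δhat h (topNoise hd h X) := by
  rw [lapUnkMap_eq]
  set u := unkCounts dbar Δ τ ε δhat h (topNoise hd h X) with hu
  have hbot : sortedCount h dbar + τ * (1 + 2 * (Δ : ℝ) * Real.log ((Δ : ℝ) / δhat) / ε)
      + X.2 = u (Fin.last dbar) := by
    simp [hu, unkCounts, topNoise]
  simp only [lapRNCMap, hbot]
  set w : Fin (d + 1) → ℝ := fun p =>
    if hp : p.val < d then
      (if (⟨p.val, hp⟩ : Fin d) ∈ topD dbar h then (h ⟨p.val, hp⟩ : ℝ) + X.1 ⟨p.val, hp⟩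
        else u (Fin.last dbar) - 1)
    else u (Fin.last dbar) with hw
  have hwlast : w (Fin.last d) = u (Fin.last dbar) := by simp [hw]
  have hwtop (a : Fin d) (ha : a.val < dbar) :
      w (sortPerm h a).castSucc = u ⟨a.val, by omega⟩ := by
    have hmem : sortPerm h a ∈ topD dbar h := mem_topD.2 ⟨a, ha, rfl⟩
    simp [hw, hu, hmem, unkCounts, topNoise, sortedCount, ha]
  have hwne (p : Fin (d + 1)) (hp : p ≠ Fin.last d) : w p ≠ w (Fin.last d) := by
    obtain ⟨i, rfl⟩ := Fin.exists_castSucc_eq.2 hp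
    rw [hwlast]
    by_cases hi : i ∈ topD dbar h
    · obtain ⟨a, ha, rfl⟩ := mem_topD.1 hi
      rw [hwtop a ha]
      exact hinj.ne (by simp [Fin.ext_iff]; omega)
    · simp [hw, hi]
  let f (p : Fin (d + 1)) : Option (Option (Fin d) × ℝ) :=
    if hp : p.val < d then
      (if (⟨p.val, hp⟩ : Fin d) ∈ topD dbar h then some (some ⟨p.val, hp⟩, w p) else none)
    else none
  let g (p : Fin (dbar + 1)) : Option (Option (Fin d) × ℝ) :=
    if hp : p.val < d then some (some (sortPerm h ⟨p.val, hp⟩), u p) else none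
  have hf (p : Fin (d + 1)) (x) : f p = some x ↔ ∃ a : Fin d, a.val < dbar ∧
      p = (sortPerm h a).castSucc ∧ x = (some (sortPerm h a), w p) := by
    constructor
    · intro hx
      simp only [f] at hx
      split_ifs at hx with hp hpD
      obtain ⟨a, ha, hap⟩ := mem_topD.1 hpD
      refine ⟨a, ha, Fin.ext (by simp [hap]), ?_⟩
      rw [hap]
      exact (Option.some.inj hx).symm
    · rintro ⟨a, ha, rfl, rfl⟩
      have hmem : sortPerm h a ∈ topD dbar h := mem_topD.2 ⟨a, ha, rfl⟩
      simp [f, hmem]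
  change (cutoffList w).filterMap f ++ _ = (cutoffList u).filterMap g ++ _
  congr 1
  refine List.Pairwise.eq_of_mem_iff (r := fun x y : Option (Fin d) × ℝ => y.2 < x.2)
    (pairwise_filterMap_cutoffList (fun p x hx => ?_) ?_)
    (pairwise_filterMap_cutoffList (fun p x hx => ?_) hinj.injOn) fun x => ?_
  · obtain ⟨a, -, -, rfl⟩ := (hf p x).1 hx
    rfl
  · intro p hp q hq hpq
    obtain ⟨x, hx⟩ := Option.ne_none_iff_exists'.1 hp
    obtain ⟨y, hy⟩ := Option.ne_none_iff_exists'.1 hq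
    obtain ⟨a, ha, rfl, -⟩ := (hf p x).1 hx
    obtain ⟨b, hb, rfl, -⟩ := (hf q y).1 hy
    rw [hwtop a ha, hwtop b hb] at hpq
    rw [Fin.ext (Fin.mk.inj (hinj hpq))]
  · simp only [g] at hx
    split_ifs at hx
    rw [← Option.some.inj hx]
  · simp only [List.mem_filterMap, mem_cutoffList hwne, mem_cutoffList fun p hp => hinj.ne hp, hf]
    constructor
    · rintro ⟨p, hlt, a, ha, rfl, rfl⟩
      rw [hwlast, hwtop a ha] at hlt
      exact ⟨_, hlt, by simp [g, hwtop a ha]⟩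
    · rintro ⟨p, hlt, hx⟩
      have hp : p.val < dbar := by
        by_contra hge
        obtain rfl : p = Fin.last dbar := Fin.ext (by simp; omega)
        exact hlt.false
      have hwp := hwtop ⟨p.val, by omega⟩ hp
      refine ⟨_, by rwa [hwlast, hwp], ⟨p.val, by omega⟩, hp, rfl, ?_⟩
      rw [hwp]
      simp only [g, dif_pos (hp.trans hd)] at hx
      exact (Option.some.inj hx).symm

/-- For any histogram `h`, the limited histogram report noisy counts mechanism
run on the domain `D_{d̄}(h)` of the top `d̄` indices of `h` and the unknown-domain Laplace
mechanism `LapUnk^{Δ,d̄,τ}(h)` produce outcomes that are equal in distribution. -/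
theorem lapRNC_topD_eq_lapUnk {d : ℕ} (dbar Δ : ℕ) (τ ε δ δhat : ℝ)
    (hd : dbar < d) (hΔ : Δ < dbar + 1)
    (hτ : 0 < τ) (hε : 0 < ε) (hδ : 0 < δ) (hδhat : 0 < δhat)
    (hsolve : δ = δhat / 4 * (Real.exp (ε / 2) + 1) * (3 + Real.log ((Δ : ℝ) / δhat)))
    (h : Fin d → ℕ) :
    lapRNC dbar Δ τ ε δhat h (topD dbar h) = lapUnk dbar Δ τ ε δhat h := by
  rcases Nat.eq_zero_or_pos Δ with rfl | hΔpos
  · have hpi : (Measure.pi fun _ : Fin (dbar + 1) => (0 : Measure ℝ)) = 0 := by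
      rw [← Measure.measure_univ_eq_zero, Measure.pi_univ]
      simp
    simp [lapRNC, lapUnk, hpi]
  have hb : 0 < 2 * τ * (Δ : ℝ) / ε := by positivity
  have := isProbabilityMeasure_lapMeasure hb
  have hmp := measurePreserving_topNoise hd h (lapMeasure (2 * τ * (Δ : ℝ) / ε))
  have hae := hmp.quasiMeasurePreserving.ae
    (ae_injective_unkCounts dbar Δ τ ε δhat h (lapMeasure (2 * τ * (Δ : ℝ) / ε)))
  rw [lapRNC, lapUnk, ← hmp.map_eq,
    Measure.map_map (measurable_lapUnkMap dbar Δ τ ε δhat h) hmp.measurable]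
  refine Measure.map_congr ?_
  filter_upwards [hae] with X hX
  exact lapRNCMap_topD_eq_lapUnkMap dbar Δ τ ε δhat hd h X hX
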